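/- Let k = 2d with d ≥ 1 and π ∈ S_k with ν(π) > 2. Let j = π(1) and let j' be the unique element of [k] congruent to j − o_j modulo k. Suppose j is not free, j' is not free, j' does not satisfy j ≈_π j', and j' occurs last in its block (i.e., π⁻¹(j') ≥ π⁻¹(j'') for all j'' with j'' ≈_π j'). Then there exists τ ∈ S_k with d_{G_k}(π, τ) ≤ 2 and ν(π) − ν(τ) ≥ 2. -/

import Mathlib

/-- `π` and `τ` are related by a prefix reversal: there is `t ≤ k` such that the first `t`
entries are reversed and the remaining entries agree (0-indexed form of the paper's
1-indexed definition). -/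
def PrefixRev (k : ℕ) (π τ : Equiv.Perm (Fin k)) : Prop :=
  ∃ t : ℕ, ∃ ht : t ≤ k,
    (∀ i : Fin k, t ≤ (i : ℕ) → π i = τ i) ∧
    (∀ i : Fin k, ∀ hi : (i : ℕ) < t, π i = τ ⟨t - 1 - (i : ℕ), by omega⟩)

/-- `π` and `τ` are related by a suffix reversal: there is `t` such that the entries at
positions `< t` agree and the remaining entries are reversed. -/
def SuffixRev (k : ℕ) (π τ : Equiv.Perm (Fin k)) : Prop :=
  ∃ t : ℕ,
    (∀ i : Fin k, (i : ℕ) < t → π i = τ i) ∧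
    (∀ i : Fin k, ∀ hi : t ≤ (i : ℕ), π i = τ ⟨k - 1 - (i : ℕ) + t, by
      have := i.isLt; omega⟩)

/-- The pancake graph `P_k`, whose edges are prefix reversals. -/
def pancakeGraph (k : ℕ) : SimpleGraph (Equiv.Perm (Fin k)) :=
  SimpleGraph.fromRel (PrefixRev k)

/-- The graph `G_k`, whose edges are prefix and suffix reversals. -/
def prefixSuffixGraph (k : ℕ) : SimpleGraph (Equiv.Perm (Fin k)) :=
  SimpleGraph.fromRel (fun π τ => PrefixRev k π τ ∨ SuffixRev k π τ)

/-- The values of `π` at positions `p` and `q` differ by `1`, or are `{1, k}`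
(1-indexed), i.e. `{0, k - 1}` in this 0-indexed formalization. -/
def PiAdjacency (k : ℕ) (π : Equiv.Perm (Fin k)) (p q : Fin k) : Prop :=
  (((π p : ℕ) : ℤ) - ((π q : ℕ) : ℤ)).natAbs = 1 ∨
    ({(π p : ℕ), (π q : ℕ)} : Set ℕ) = {0, k - 1}

/-- Positions `i` and `i + 1` (0-indexed) form a `π`-adjacency. -/
def PosAdjacency (k : ℕ) (π : Equiv.Perm (Fin k)) (i : ℕ) : Prop :=
  ∃ h : i + 1 < k, PiAdjacency k π ⟨i, by omega⟩ ⟨i + 1, h⟩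

/-- The equivalence relation `∼_π`: `a ∼_π b` iff every pair of consecutive positions
between the position of `a` and the position of `b` is a `π`-adjacency. -/
def Sim (k : ℕ) (π : Equiv.Perm (Fin k)) (a b : Fin k) : Prop :=
  ∀ i : ℕ, min ((π.symm a : ℕ)) ((π.symm b : ℕ)) ≤ i →
    i < max ((π.symm a : ℕ)) ((π.symm b : ℕ)) → PosAdjacency k π i

/-- `∼_π` has exactly one equivalence class on `[k]`. -/
def OneClass (k : ℕ) (π : Equiv.Perm (Fin k)) : Prop :=
  ∀ a b : Fin k, Sim k π a b

/-- The pairing `φ(j) = j + o_j`, swapping `2i - 1 ↔ 2i` (1-indexed),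
i.e. `2i ↔ 2i + 1` (0-indexed). -/
def partner (d : ℕ) (j : Fin (2 * d)) : Fin (2 * d) :=
  ⟨if (j : ℕ) % 2 = 0 then (j : ℕ) + 1 else (j : ℕ) - 1, by
    have := j.isLt; split <;> omega⟩

/-- The equivalence relation `≈_π`. -/
def ApproxSim (d : ℕ) (π : Equiv.Perm (Fin (2 * d))) (a b : Fin (2 * d)) : Prop :=
  a = b ∨ (Sim (2 * d) π a b ∧ Sim (2 * d) π a (partner d a) ∧
    Sim (2 * d) π b (partner d b))

/-- `j` is free, i.e. `{j}` is an equivalence class (a singleton) of `≈_π`. -/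
def IsFree (d : ℕ) (π : Equiv.Perm (Fin (2 * d))) (j : Fin (2 * d)) : Prop :=
  ∀ j' : Fin (2 * d), ApproxSim d π j j' → j' = j

/-- The `≈_π`-equivalence class of `j`, as a finite set. -/
noncomputable def classOf (d : ℕ) (π : Equiv.Perm (Fin (2 * d))) (j : Fin (2 * d)) :
    Finset (Fin (2 * d)) :=
  @Finset.filter _ (fun j' => ApproxSim d π j j') (Classical.decPred _) Finset.univ

/-- `S(π)`, the number of singletons of `π`. -/
noncomputable def numSingletons (d : ℕ) (π : Equiv.Perm (Fin (2 * d))) : ℕ :=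
  (@Finset.filter _ (fun j => IsFree d π j) (Classical.decPred _) Finset.univ).card

/-- `B(π)`, the number of blocks (equivalence classes of `≈_π` of size `> 1`) of `π`. -/
noncomputable def numBlocks (d : ℕ) (π : Equiv.Perm (Fin (2 * d))) : ℕ :=
  ((Finset.univ.image (classOf d π)).filter (fun C => 1 < C.card)).card

/-- The potential function `ν(π) = (3/2) S(π) + 2 B(π)`. -/
noncomputable def nu (d : ℕ) (π : Equiv.Perm (Fin (2 * d))) : ℚ :=
  3 / 2 * (numSingletons d π : ℚ) + 2 * (numBlocks d π : ℚ)

/-- The unique element of `[k]` congruent to `j - o_j` modulo `k` (0-indexed form). -/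
def prevVal (d : ℕ) (j : Fin (2 * d)) : Fin (2 * d) :=
  ⟨if (j : ℕ) % 2 = 0 then ((j : ℕ) + 2 * d - 1) % (2 * d) else ((j : ℕ) + 1) % (2 * d), by
    have := j.isLt; split <;> exact Nat.mod_lt _ (by omega)⟩

/-!
Write `π` as a word `X R Y`, where `R` is the maximal run of adjacencies containing `j'`. Since `j'`
is last in its block and `j = π(1)` is its only other cyclic neighbour, `R` ends with `j'`; since
`j ≉ j'`, the word `X` is non-empty and starts with `j`. Reversing the suffix `R Y` and then the
prefix `X Yʳ` produces `τ = Y Xʳ Rʳ`. No adjacency of `π` is cut, so the classes of `≈_π` refine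
those of `≈_τ`, and `j`, `j'` have become neighbours, so two blocks of `π` lie in one block of `τ`.
As every class weighs at least `3/2` and at most `2`, merging classes never increases the total
weight `ν`, and merging two blocks decreases it by `2`.
-/

section Refinement

open Finset

variable {α M : Type*} [DecidableEq α] {s : Finset α} {P Q : Finpartition s}

lemma subset_part_of_le_of_mem (hPQ : P ≤ Q) {C D : Finset α} (hC : C ∈ P.parts)
    (hD : D ∈ Q.parts) {a : α} (haC : a ∈ C) (haD : a ∈ D) : C ⊆ D := by
  obtain ⟨D', hD', hCD'⟩ := hPQ hC
  rwa [Q.eq_of_mem_parts hD hD' haD (hCD' haC)]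

lemma sum_parts_eq_sum_sum_of_le [AddCommMonoid M] (hPQ : P ≤ Q) (w : Finset α → M) :
    ∑ C ∈ P.parts, w C = ∑ D ∈ Q.parts, ∑ C ∈ P.parts with C ⊆ D, w C := by
  have parts_eq : P.parts = Q.parts.biUnion fun D => {C ∈ P.parts | C ⊆ D} := by
    ext C
    simp only [mem_biUnion, mem_filter]
    refine ⟨fun hC => ?_, fun ⟨_, _, hC, _⟩ => hC⟩
    obtain ⟨D, hD, hCD⟩ := hPQ hC
    exact ⟨D, hD, hC, hCD⟩
  conv_lhs => rw [parts_eq]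
  refine sum_biUnion fun D hD D' hD' hne => disjoint_left.2 fun C hC hC' => hne ?_
  rw [mem_filter] at hC hC'
  obtain ⟨a, ha⟩ := P.nonempty_of_mem_parts hC.1
  exact Q.eq_of_mem_parts hD hD' (hC.2 ha) (hC'.2 ha)

variable [AddCommMonoid M] [PartialOrder M] [IsOrderedAddMonoid M] {w : Finset α → M}

lemma add_le_sum_parts_subset (hw : ∀ C, 0 ≤ w C) {C₁ C₂ D : Finset α} (hC₁ : C₁ ∈ P.parts)
    (hC₂ : C₂ ∈ P.parts) (hne : C₁ ≠ C₂) (h₁ : C₁ ⊆ D) (h₂ : C₂ ⊆ D) :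
    w C₁ + w C₂ ≤ ∑ C ∈ P.parts with C ⊆ D, w C := by
  rw [← sum_pair hne]
  refine sum_le_sum_of_subset_of_nonneg ?_ fun C _ _ => hw C
  simp [insert_subset_iff, hC₁, hC₂, h₁, h₂]

variable {m : M}

lemma weight_le_sum_parts_subset (hm : 0 ≤ m) (hlow : ∀ C, m ≤ w C) (hupp : ∀ C, w C ≤ m + m)
    (hPQ : P ≤ Q) {D : Finset α} (hD : D ∈ Q.parts) :
    w D ≤ ∑ C ∈ P.parts with C ⊆ D, w C := by
  have hw : ∀ C, 0 ≤ w C := fun C => hm.trans (hlow C)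
  obtain ⟨C, hC, hCD⟩ := Finpartition.exists_le_of_le hPQ hD
  obtain rfl | hne := eq_or_ne C D
  · exact single_le_sum (fun C _ => hw C) (mem_filter.2 ⟨hC, subset_rfl⟩)
  obtain ⟨a, haD, haC⟩ := exists_of_ssubset (hCD.ssubset_of_ne hne)
  obtain ⟨C', hC', haC'⟩ := P.exists_mem (Q.subset hD haD)
  calc w D ≤ m + m := hupp D
    _ ≤ w C + w C' := add_le_add (hlow C) (hlow C')
    _ ≤ ∑ C ∈ P.parts with C ⊆ D, w C :=
      add_le_sum_parts_subset hw hC hC' (by rintro rfl; exact haC haC') hCD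
        (subset_part_of_le_of_mem hPQ hC' hD haC' haD)

lemma sum_parts_add_le_of_merge (hm : 0 ≤ m) (hlow : ∀ C, m ≤ w C) (hupp : ∀ C, w C ≤ m + m)
    (hPQ : P ≤ Q) {C₁ C₂ D : Finset α} (hC₁ : C₁ ∈ P.parts) (hC₂ : C₂ ∈ P.parts)
    (hne : C₁ ≠ C₂) (hD : D ∈ Q.parts) (h₁ : C₁ ⊆ D) (h₂ : C₂ ⊆ D) :
    ∑ B ∈ Q.parts, w B + (w C₁ + w C₂) ≤ ∑ C ∈ P.parts, w C + w D := by
  have hmerged : w C₁ + w C₂ ≤ ∑ C ∈ P.parts with C ⊆ D, w C :=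
    add_le_sum_parts_subset (fun C => hm.trans (hlow C)) hC₁ hC₂ hne h₁ h₂
  have hrest : ∑ B ∈ Q.parts.erase D, w B ≤
      ∑ B ∈ Q.parts.erase D, ∑ C ∈ P.parts with C ⊆ B, w C :=
    sum_le_sum fun B hB => weight_le_sum_parts_subset hm hlow hupp hPQ (mem_of_mem_erase hB)
  calc ∑ B ∈ Q.parts, w B + (w C₁ + w C₂)
      = w C₁ + w C₂ + ∑ B ∈ Q.parts.erase D, w B + w D := by
        rw [← sum_erase_add _ _ hD]; abel
    _ ≤ ∑ C ∈ P.parts with C ⊆ D, w C +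
          ∑ B ∈ Q.parts.erase D, ∑ C ∈ P.parts with C ⊆ B, w C + w D := by
        gcongr
    _ = ∑ C ∈ P.parts, w C + w D := by
        rw [sum_parts_eq_sum_sum_of_le hPQ, ← add_sum_erase _ _ hD]

end Refinement

section CyclicAdjacency

/-- `a` and `b` are neighbours on the cycle `0, 1, …, k - 1, 0`: the condition that `PiAdjacency`
imposes on the values of a permutation, in a form suited to linear arithmetic. -/
def CyclicAdj {k : ℕ} (a b : Fin k) : Prop :=
  (a : ℕ) + 1 = b ∨ (b : ℕ) + 1 = a ∨
    ((a : ℕ) = 0 ∧ (b : ℕ) = k - 1) ∨ ((a : ℕ) = k - 1 ∧ (b : ℕ) = 0)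

lemma CyclicAdj.symm {k : ℕ} {a b : Fin k} (h : CyclicAdj a b) : CyclicAdj b a := by
  unfold CyclicAdj at *
  omega

lemma piAdjacency_iff {k : ℕ} {π : Equiv.Perm (Fin k)} {p q : Fin k} :
    PiAdjacency k π p q ↔ CyclicAdj (π p) (π q) := by
  rw [PiAdjacency, CyclicAdj, Set.pair_eq_pair_iff]
  omega

variable {d : ℕ} (a b : Fin (2 * d))

lemma partner_partner : partner d (partner d a) = a := by
  ext
  simp only [partner]
  split_ifs <;> omega

lemma val_prevVal :
    (prevVal d a : ℕ) =
      if (a : ℕ) % 2 = 0 then (if (a : ℕ) = 0 then 2 * d - 1 else a - 1)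
      else if (a : ℕ) + 1 = 2 * d then 0 else a + 1 := by
  have ha := a.isLt
  simp only [prevVal]
  split_ifs with _ h₀ h₀
  · rw [h₀, zero_add, Nat.mod_eq_of_lt (by omega)]
  · rw [show (a : ℕ) + 2 * d - 1 = (a - 1) + 2 * d by omega, Nat.add_mod_right,
      Nat.mod_eq_of_lt (by omega)]
  · rw [h₀, Nat.mod_self]
  · rw [Nat.mod_eq_of_lt (by omega)]

lemma cyclicAdj_prevVal_iff :
    CyclicAdj (prevVal d a) b ↔ b = a ∨ b = partner d (prevVal d a) := by
  have ha := a.isLt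
  have hb := b.isLt
  have hprev := val_prevVal a
  simp only [CyclicAdj, Fin.ext_iff, partner]
  generalize (prevVal d a : ℕ) = q at hprev ⊢
  split_ifs at hprev ⊢ <;> omega

end CyclicAdjacency

section Similarity

variable {k : ℕ} {π τ : Equiv.Perm (Fin k)} {a b c : Fin k}

lemma Sim.refl (a : Fin k) : Sim k π a a := by
  intro i _ _
  omega

lemma Sim.symm (h : Sim k π a b) : Sim k π b a := by
  rwa [Sim, min_comm, max_comm]

lemma Sim.trans (hab : Sim k π a b) (hbc : Sim k π b c) : Sim k π a c := by
  intro i hmin hmax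
  by_cases hi : min (π.symm a : ℕ) (π.symm b) ≤ i ∧ i < max (π.symm a : ℕ) (π.symm b)
  · exact hab i hi.1 hi.2
  · exact hbc i (by omega) (by omega)

lemma sim_of_symm_succ_eq (hpos : (π.symm a : ℕ) + 1 = π.symm b) (hab : CyclicAdj a b) :
    Sim k π a b := by
  intro i hmin hmax
  obtain rfl : i = (π.symm a : ℕ) := by omega
  have hlt : (π.symm a : ℕ) + 1 < k := hpos ▸ (π.symm b).isLt
  have hsucc : (⟨(π.symm a : ℕ) + 1, hlt⟩ : Fin k) = π.symm b := Fin.ext hpos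
  exact ⟨hlt, piAdjacency_iff.2 (by simpa [hsucc] using hab)⟩

lemma Sim.mono_of_posAdjacency
    (hτ : ∀ i (hi : i + 1 < k), PosAdjacency k π i → Sim k τ (π ⟨i, by omega⟩) (π ⟨i + 1, hi⟩))
    (h : Sim k π a b) : Sim k τ a b := by
  wlog hle : (π.symm a : ℕ) ≤ π.symm b generalizing a b
  · exact (this h.symm (le_of_not_ge hle)).symm
  have hrun : ∀ n, (π.symm a : ℕ) ≤ n → ∀ hn : n < k, n ≤ π.symm b → Sim k τ a (π ⟨n, hn⟩) := by
    refine Nat.le_induction (fun _ _ => ?_) fun n han ih hn hnb => ?_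
    · simpa using Sim.refl a
    · exact (ih (by omega) (by omega)).trans (hτ n hn (h n (by omega) (by omega)))
  simpa using hrun _ hle (π.symm b).isLt le_rfl

lemma Sim.mono_of_consecutive
    (hτ : ∀ i (hi : i + 1 < k), PosAdjacency k π i →
      (τ.symm (π ⟨i, by omega⟩) : ℕ) + 1 = τ.symm (π ⟨i + 1, hi⟩) ∨
        (τ.symm (π ⟨i + 1, hi⟩) : ℕ) + 1 = τ.symm (π ⟨i, by omega⟩))
    (h : Sim k π a b) : Sim k τ a b := by
  refine h.mono_of_posAdjacency fun i hi hadj => ?_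
  have hval : CyclicAdj (π ⟨i, by omega⟩) (π ⟨i + 1, hi⟩) := piAdjacency_iff.1 hadj.2
  obtain hpos | hpos := hτ i hi hadj
  · exact sim_of_symm_succ_eq hpos hval
  · exact (sim_of_symm_succ_eq hpos hval.symm).symm

end Similarity

section Reversals

variable {k : ℕ}

/-- The involution of positions that reverses the segment `[l, r)` and fixes all other positions;
prefix and suffix reversals are the cases `l = 0` and `r = k`. -/
def segmentRev (k l r : ℕ) (hr : r ≤ k) : Equiv.Perm (Fin k) :=
  Function.Involutive.toPerm
    (fun i => if h : l ≤ (i : ℕ) ∧ (i : ℕ) < r then ⟨l + r - 1 - i, by omega⟩ else i)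
    (by intro i; grind)

lemma val_segmentRev {l r : ℕ} (hr : r ≤ k) (i : Fin k) :
    (segmentRev k l r hr i : ℕ) =
      if l ≤ (i : ℕ) ∧ (i : ℕ) < r then l + r - 1 - (i : ℕ) else i := by
  change ((if _ : _ then _ else _ : Fin k) : ℕ) = _
  split_ifs <;> rfl

lemma segmentRev_symm {l r : ℕ} (hr : r ≤ k) :
    (segmentRev k l r hr).symm = segmentRev k l r hr :=
  Function.Involutive.toPerm_symm _

lemma prefixRev_mul_segmentRev (π : Equiv.Perm (Fin k)) {t : ℕ} (ht : t ≤ k) :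
    PrefixRev k π (π * segmentRev k 0 t ht) := by
  refine ⟨t, ht, fun i hi => ?_, fun i hi => ?_⟩ <;>
  · rw [Equiv.Perm.mul_apply]
    congr 1
    ext
    grind [val_segmentRev]

lemma suffixRev_mul_segmentRev (π : Equiv.Perm (Fin k)) (s : ℕ) :
    SuffixRev k π (π * segmentRev k s k le_rfl) := by
  refine ⟨s, fun i hi => ?_, fun i hi => ?_⟩ <;>
  · rw [Equiv.Perm.mul_apply]
    congr 1
    ext
    grind [val_segmentRev]

lemma edist_le_one_of_reversal {π τ : Equiv.Perm (Fin k)}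
    (h : PrefixRev k π τ ∨ SuffixRev k π τ) : (prefixSuffixGraph k).edist π τ ≤ 1 := by
  rw [SimpleGraph.edist_le_one_iff_adj_or_eq, prefixSuffixGraph, SimpleGraph.fromRel_adj]
  tauto

variable (π : Equiv.Perm (Fin k)) {s : ℕ} {p : Fin k}

/-- The permutation `Y Xʳ Rʳ` obtained from the word `π = X R Y`, where `R` occupies the positions
`s, …, p`, by reversing the suffix `R Y` and then the prefix `X Yʳ`. It makes the first entry of `X`
and the last entry of `R` neighbours. -/
def swapFlip (hsp : s ≤ p) : Equiv.Perm (Fin k) :=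
  π * segmentRev k s k le_rfl * segmentRev k 0 (s + (k - 1 - p)) (by omega)

lemma val_swapFlip_symm_apply (hsp : s ≤ p) (i : Fin k) :
    ((swapFlip π hsp).symm (π i) : ℕ) =
      if (i : ℕ) < s then s + (k - 1 - p) - 1 - i
      else if (i : ℕ) ≤ p then s + k - 1 - i else i - p - 1 := by
  have hinv : (swapFlip π hsp).symm (π i) =
      segmentRev k 0 (s + (k - 1 - p)) (by omega) (segmentRev k s k le_rfl i) := by
    simp [swapFlip, Equiv.Perm.mul_def, segmentRev_symm]
  rw [hinv]
  simp only [val_segmentRev]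
  split_ifs <;> omega

lemma dist_swapFlip_le_two (hsp : s ≤ p) :
    (prefixSuffixGraph k).dist π (swapFlip π hsp) ≤ 2 := by
  refine ENat.toNat_le_of_le_natCast ?_
  calc (prefixSuffixGraph k).edist π (swapFlip π hsp)
      ≤ (prefixSuffixGraph k).edist π (π * segmentRev k s k le_rfl) +
          (prefixSuffixGraph k).edist (π * segmentRev k s k le_rfl) (swapFlip π hsp) :=
        SimpleGraph.edist_triangle
    _ ≤ 1 + 1 :=
        add_le_add (edist_le_one_of_reversal (.inr (suffixRev_mul_segmentRev π s)))
          (edist_le_one_of_reversal (.inl (prefixRev_mul_segmentRev _ _)))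
    _ = 2 := one_add_one_eq_two

variable {π}

lemma Sim.swapFlip (hsp : s ≤ p) (hstart : ∀ i, i + 1 = s → ¬ PosAdjacency k π i)
    (hend : ¬ PosAdjacency k π p) {a b : Fin k} (h : Sim k π a b) :
    Sim k (swapFlip π hsp) a b := by
  refine h.mono_of_consecutive fun i hi hadj => ?_
  have hs : i + 1 ≠ s := fun hs => hstart i hs hadj
  have hp : i ≠ p := fun hp => hend (hp ▸ hadj)
  simp only [val_swapFlip_symm_apply]
  split_ifs <;> omega

lemma sim_swapFlip_first_last (hk : 0 < k) (hs : 0 < s) (hsp : s ≤ p)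
    (hadj : CyclicAdj (π ⟨0, hk⟩) (π p)) : Sim k (swapFlip π hsp) (π ⟨0, hk⟩) (π p) := by
  refine sim_of_symm_succ_eq ?_ hadj
  simp only [val_swapFlip_symm_apply]
  split_ifs <;> omega

lemma exists_run_ending_at (A : ℕ → Prop) (p : ℕ) :
    ∃ s ≤ p, (∀ i, s ≤ i → i < p → A i) ∧ ∀ i, i + 1 = s → ¬ A i := by
  induction p with
  | zero => exact ⟨0, le_rfl, by omega, by omega⟩
  | succ p ih =>
    by_cases hp : A p
    · obtain ⟨s, hsp, hrun, hstart⟩ := ih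
      refine ⟨s, by omega, fun i hsi hip => ?_, hstart⟩
      obtain rfl | hlt := eq_or_lt_of_le (Nat.le_of_lt_succ hip)
      exacts [hp, hrun i hsi hlt]
    · exact ⟨p + 1, le_rfl, by omega, fun i hi => by rwa [Nat.succ_injective hi]⟩

theorem exists_dist_le_two_joining_first (hk : 0 < k) (hend : ¬ PosAdjacency k π p)
    (hsep : ¬ Sim k π (π ⟨0, hk⟩) (π p)) (hadj : CyclicAdj (π ⟨0, hk⟩) (π p)) :
    ∃ τ : Equiv.Perm (Fin k), (prefixSuffixGraph k).dist π τ ≤ 2 ∧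
      (∀ a b, Sim k π a b → Sim k τ a b) ∧ Sim k τ (π ⟨0, hk⟩) (π p) := by
  obtain ⟨s, hsp, hrun, hstart⟩ := exists_run_ending_at (PosAdjacency k π) p
  have hs : 0 < s := by
    refine Nat.pos_of_ne_zero fun hs => hsep fun i _ hmax => hrun i (by omega) ?_
    simpa using hmax
  exact ⟨swapFlip π hsp, dist_swapFlip_le_two π hsp, fun _ _ => Sim.swapFlip hsp hstart hend,
    sim_swapFlip_first_last hk hs hsp hadj⟩

end Reversals

section Potential

variable {d : ℕ} {π τ : Equiv.Perm (Fin (2 * d))} {a b c : Fin (2 * d)}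

lemma ApproxSim.symm (h : ApproxSim d π a b) : ApproxSim d π b a :=
  h.imp Eq.symm fun ⟨hab, ha, hb⟩ => ⟨hab.symm, hb, ha⟩

lemma ApproxSim.trans (hab : ApproxSim d π a b) (hbc : ApproxSim d π b c) :
    ApproxSim d π a c := by
  obtain rfl | ⟨hab, ha, hb⟩ := hab
  · exact hbc
  obtain rfl | ⟨hbc, -, hc⟩ := hbc
  · exact .inr ⟨hab, ha, hb⟩
  · exact .inr ⟨hab.trans hbc, ha, hc⟩

lemma ApproxSim.mono (hmono : ∀ a b, Sim (2 * d) π a b → Sim (2 * d) τ a b)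
    (h : ApproxSim d π a b) : ApproxSim d τ a b :=
  h.imp_right fun ⟨hab, ha, hb⟩ => ⟨hmono _ _ hab, hmono _ _ ha, hmono _ _ hb⟩

lemma sim_partner_of_not_isFree (h : ¬ IsFree d π a) : Sim (2 * d) π a (partner d a) := by
  simp only [IsFree, not_forall] at h
  obtain ⟨b, rfl | ⟨-, ha, -⟩, hne⟩ := h
  exacts [absurd rfl hne, ha]

lemma approxSim_partner_of_not_isFree (h : ¬ IsFree d π a) : ApproxSim d π a (partner d a) := by
  have hsim := sim_partner_of_not_isFree h
  exact .inr ⟨hsim, hsim, by simpa only [partner_partner] using hsim.symm⟩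

lemma not_posAdjacency_of_prevVal_last (ha : π.symm a ≤ π.symm (prevVal d a))
    (hfree : ¬ IsFree d π (prevVal d a))
    (hlast : ∀ b, ApproxSim d π (prevVal d a) b → π.symm b ≤ π.symm (prevVal d a)) :
    ¬ PosAdjacency (2 * d) π (π.symm (prevVal d a)) := by
  rintro ⟨hlt, hadj⟩
  rw [piAdjacency_iff, Fin.eta, Equiv.apply_symm_apply, cyclicAdj_prevVal_iff] at hadj
  suffices hle : (⟨π.symm (prevVal d a) + 1, hlt⟩ : Fin (2 * d)) ≤ π.symm (prevVal d a) by
    simp [Fin.le_def] at hle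
  obtain hnext | hnext := hadj <;> rw [← Equiv.eq_symm_apply] at hnext <;> rw [hnext]
  · exact ha
  · exact hlast _ (approxSim_partner_of_not_isFree hfree)

lemma mem_classOf : b ∈ classOf d π a ↔ ApproxSim d π a b := by
  simp [classOf]

lemma self_mem_classOf (a : Fin (2 * d)) : a ∈ classOf d π a :=
  mem_classOf.2 (.inl rfl)

lemma classOf_eq_classOf_iff : classOf d π a = classOf d π b ↔ ApproxSim d π a b := by
  refine ⟨fun h => mem_classOf.1 (h ▸ self_mem_classOf b), fun h => ?_⟩
  ext c
  simp only [mem_classOf]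
  exact ⟨h.symm.trans, h.trans⟩

lemma one_lt_card_classOf_iff : 1 < (classOf d π a).card ↔ ¬ IsFree d π a := by
  rw [Finset.one_lt_card_iff_nontrivial, Finset.Nontrivial,
    Set.nontrivial_iff_exists_ne (Finset.mem_coe.2 (self_mem_classOf a))]
  simp only [Finset.mem_coe, mem_classOf, IsFree, not_forall, exists_prop, ne_eq]

/-- The partition of `[2d]` into the equivalence classes of `≈_π`. -/
noncomputable def classPartition (d : ℕ) (π : Equiv.Perm (Fin (2 * d))) :
    Finpartition (Finset.univ : Finset (Fin (2 * d))) :=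
  Finpartition.ofExistsUnique (Finset.univ.image (classOf d π)) (fun _ _ => Finset.subset_univ _)
    (fun a _ => ⟨classOf d π a, by simp [self_mem_classOf], by
      simp only [Finset.mem_image, Finset.mem_univ, true_and, and_imp, forall_exists_index,
        forall_apply_eq_imp_iff, mem_classOf]
      exact fun b hba => classOf_eq_classOf_iff.2 hba⟩)
    (by simpa using fun a => Finset.ne_empty_of_mem (self_mem_classOf a))

lemma classOf_mem_parts (a : Fin (2 * d)) : classOf d π a ∈ (classPartition d π).parts :=
  Finset.mem_image_of_mem _ (Finset.mem_univ a)

lemma classPartition_le (hmono : ∀ a b, ApproxSim d π a b → ApproxSim d τ a b) :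
    classPartition d π ≤ classPartition d τ := by
  intro C hC
  obtain ⟨a, -, rfl⟩ := Finset.mem_image.1 hC
  exact ⟨classOf d τ a, classOf_mem_parts a, fun b hb =>
    mem_classOf.2 (hmono a b (mem_classOf.1 hb))⟩

/-- The contribution of a class to the potential `ν`: `2` for a block, `3/2` for a singleton. -/
def classWeight {α : Type*} (C : Finset α) : ℚ := if 1 < C.card then 2 else 3 / 2

lemma three_halves_le_classWeight {α : Type*} (C : Finset α) : 3 / 2 ≤ classWeight C := by
  unfold classWeight
  split_ifs <;> norm_num

lemma classWeight_le_two {α : Type*} (C : Finset α) : classWeight C ≤ 2 := by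
  unfold classWeight
  split_ifs <;> norm_num

lemma classWeight_classOf (ha : ¬ IsFree d π a) : classWeight (classOf d π a) = 2 :=
  if_pos (one_lt_card_classOf_iff.2 ha)

lemma numSingletons_eq_card_filter_parts (d : ℕ) (π : Equiv.Perm (Fin (2 * d))) :
    numSingletons d π = ((classPartition d π).parts.filter fun C => ¬ 1 < C.card).card := by
  classical
  rw [show (classPartition d π).parts = Finset.univ.image (classOf d π) from rfl,
    Finset.filter_image, Finset.card_image_of_injOn]
  · simp only [one_lt_card_classOf_iff, not_not, numSingletons]
  · intro a ha b _ hab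
    simp only [one_lt_card_classOf_iff, not_not, Finset.coe_filter, Finset.mem_univ, true_and,
      Set.mem_ofPred_eq] at ha
    exact (ha b (classOf_eq_classOf_iff.1 hab)).symm

lemma nu_eq_sum_classWeight (d : ℕ) (π : Equiv.Perm (Fin (2 * d))) :
    nu d π = ∑ C ∈ (classPartition d π).parts, classWeight C := by
  have hblocks : numBlocks d π =
      ((classPartition d π).parts.filter fun C => 1 < C.card).card := rfl
  simp only [nu, numSingletons_eq_card_filter_parts, hblocks, classWeight, Finset.sum_ite,
    Finset.sum_const, nsmul_eq_mul]
  ring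

theorem two_le_nu_sub_nu_of_merge (hmono : ∀ x y, ApproxSim d π x y → ApproxSim d τ x y)
    (ha : ¬ IsFree d π a) (hb : ¬ IsFree d π b) (hπ : ¬ ApproxSim d π a b)
    (hτ : ApproxSim d τ a b) : 2 ≤ nu d π - nu d τ := by
  have hle := classPartition_le hmono
  have hdrop := sum_parts_add_le_of_merge (m := 3 / 2) (by norm_num) three_halves_le_classWeight
    (fun C => (classWeight_le_two C).trans (by norm_num)) hle
    (classOf_mem_parts a) (classOf_mem_parts b) (mt classOf_eq_classOf_iff.1 hπ)
    (classOf_mem_parts a)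
    (subset_part_of_le_of_mem hle (classOf_mem_parts a) (classOf_mem_parts a)
      (self_mem_classOf a) (self_mem_classOf a))
    (subset_part_of_le_of_mem hle (classOf_mem_parts b) (classOf_mem_parts a)
      (self_mem_classOf b) (mem_classOf.2 hτ))
  rw [← nu_eq_sum_classWeight, ← nu_eq_sum_classWeight, classWeight_classOf ha,
    classWeight_classOf hb] at hdrop
  linarith [classWeight_le_two (classOf d τ a)]

end Potential

/-- Let `k = 2d`, `d ≥ 1`, and `π ∈ S_k` with `ν(π) > 2`. Let
`j = π(1)` and `j'` the unique element of `[k]` congruent to `j - o_j` mod `k`. If `j`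
and `j'` are not free, `j ≈_π j'` fails, and `j'` occurs last in its block, then there is
`τ` with `d_{G_k}(π, τ) ≤ 2` and `ν(π) - ν(τ) ≥ 2`. -/
theorem statement_14 (d : ℕ) (hd : 1 ≤ d) (π : Equiv.Perm (Fin (2 * d)))
    (hν : 2 < nu d π)
    (hj : ¬ IsFree d π (π ⟨0, by omega⟩))
    (hj' : ¬ IsFree d π (prevVal d (π ⟨0, by omega⟩)))
    (hsep : ¬ ApproxSim d π (π ⟨0, by omega⟩) (prevVal d (π ⟨0, by omega⟩)))
    (hlast : ∀ j'' : Fin (2 * d), ApproxSim d π (prevVal d (π ⟨0, by omega⟩)) j'' →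
      (π.symm j'' : ℕ) ≤ (π.symm (prevVal d (π ⟨0, by omega⟩)) : ℕ)) :
    ∃ τ : Equiv.Perm (Fin (2 * d)),
      (prefixSuffixGraph (2 * d)).dist π τ ≤ 2 ∧ 2 ≤ nu d π - nu d τ := by
  set j := π ⟨0, by omega⟩ with hj_def
  have hsim := sim_partner_of_not_isFree hj
  have hsim' := sim_partner_of_not_isFree hj'
  have hfirst : π.symm j ≤ π.symm (prevVal d j) := by simp [hj_def, Fin.le_def]
  have hadj : CyclicAdj j (prevVal d j) := ((cyclicAdj_prevVal_iff j j).2 (.inl rfl)).symm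
  have hnot_sim : ¬ Sim (2 * d) π j (prevVal d j) := fun h => hsep (.inr ⟨h, hsim, hsim'⟩)
  have hπ : π (π.symm (prevVal d j)) = prevVal d j := π.apply_symm_apply _
  obtain ⟨τ, hdist, hmono, hjoin⟩ := exists_dist_le_two_joining_first (by omega)
    (not_posAdjacency_of_prevVal_last hfirst hj' hlast) (hπ.symm ▸ hnot_sim) (hπ.symm ▸ hadj)
  rw [hπ] at hjoin
  exact ⟨τ, hdist, two_le_nu_sub_nu_of_merge (fun _ _ => ApproxSim.mono hmono) hj hj' hsep
    (.inr ⟨hjoin, hmono _ _ hsim, hmono _ _ hsim'⟩)⟩
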